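/- Let λ have block structure k. For faces F_1, F_2 of the Gelfand–Cetlin polytope P_λ, one has F_1 ⊆ F_2 if and only if φ(F_1) ⊆ φ(F_2); that is, φ is an isomorphism of posets from the faces of P_λ (ordered by inclusion) to the faces of Γ_k (ordered by inclusion of subgraphs). Moreover dim F = dim φ(F) for every face F of P_λ, where dim F is the dimension of the affine span of F and dim φ(F) = |E(φ(F))| − |V(φ(F))| + 1. -/

import Mathlib

open Classical

noncomputable section

/-- Partial sums of the (0-indexed) sequence `k`: `nseq k i = k 0 + ⋯ + k (i-1)`;
so `nseq k i` is the paper's `n_i` for the sequence `(k_1, …, k_s) = (k 0, …, k (s-1))`. -/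
def nseq (k : ℕ → ℕ) (i : ℕ) : ℕ := ∑ j ∈ Finset.range i, k j

/-- The set of terminal vertices `T_k = {(n_i, n - n_i) : 0 ≤ i ≤ s}` of the ladder diagram. -/
def terminals (s : ℕ) (k : ℕ → ℕ) : Set (ℕ × ℕ) :=
  {v | ∃ i ≤ s, v = (nseq k i, nseq k s - nseq k i)}

/-- The vertex set of the ladder diagram `Γ_k`. -/
def ladderV (s : ℕ) (k : ℕ → ℕ) : Set (ℕ × ℕ) :=
  {v | ∃ t ∈ terminals s k, v.1 ≤ t.1 ∧ v.2 ≤ t.2}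

/-- A unit grid step: one step to the right or one step up. -/
def gridStep (v w : ℕ × ℕ) : Prop :=
  w = (v.1 + 1, v.2) ∨ w = (v.1, v.2 + 1)

/-- The edge set of the ladder diagram `Γ_k`. -/
def ladderE (s : ℕ) (k : ℕ → ℕ) : Set ((ℕ × ℕ) × (ℕ × ℕ)) :=
  {e | e.1 ∈ ladderV s k ∧ e.2 ∈ ladderV s k ∧ gridStep e.1 e.2}

/-- A combinatorial (directed) graph in the grid `ℤ_{≥0} × ℤ_{≥0}`,
given by a set of vertices and a set of edges. -/
@[ext] structure LGraph where
  V : Set (ℕ × ℕ)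
  E : Set ((ℕ × ℕ) × (ℕ × ℕ))

/-- Subgraph inclusion order on grid graphs. -/
instance : PartialOrder LGraph where
  le γ γ' := γ.V ⊆ γ'.V ∧ γ.E ⊆ γ'.E
  le_refl γ := ⟨subset_rfl, subset_rfl⟩
  le_trans a b c h h' := ⟨h.1.trans h'.1, h.2.trans h'.2⟩
  le_antisymm a b h h' := LGraph.ext (subset_antisymm h.1 h'.1) (subset_antisymm h.2 h'.2)

/-- The ladder diagram `Γ_k` as a grid graph. -/
def ladder (s : ℕ) (k : ℕ → ℕ) : LGraph :=
  ⟨ladderV s k, ladderE s k⟩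

/-- A positive path: (the graph of) a shortest path in the ladder diagram `Γ_k`
from the origin `(0,0)` to a terminal vertex. -/
def IsPositivePath (s : ℕ) (k : ℕ → ℕ) (p : LGraph) : Prop :=
  ∃ (m : ℕ) (f : ℕ → ℕ × ℕ),
    f 0 = (0, 0) ∧ f m ∈ terminals s k ∧
    (∀ i < m, gridStep (f i) (f (i + 1))) ∧
    (∀ i ≤ m, f i ∈ ladderV s k) ∧
    p.V = {v | ∃ i ≤ m, v = f i} ∧
    p.E = {e | ∃ i < m, e = (f i, f (i + 1))}

/-- A face of the ladder diagram `Γ_k`: a subgraph which contains all terminal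
vertices and is a union of positive paths. -/
def IsLadderFace (s : ℕ) (k : ℕ → ℕ) (γ : LGraph) : Prop :=
  terminals s k ⊆ γ.V ∧
  ∃ P : Set LGraph, (∀ p ∈ P, IsPositivePath s k p) ∧
    γ.V = ⋃ p ∈ P, LGraph.V p ∧ γ.E = ⋃ p ∈ P, LGraph.E p

/-- The dimension (first Betti number) of a face of a ladder diagram:
`|E(γ)| - |V(γ)| + 1`. -/
def ldim (γ : LGraph) : ℤ :=
  (γ.E.ncard : ℤ) - (γ.V.ncard : ℤ) + 1

/-- The index set `I = {(i,j) : i,j ≥ 1, i+j ≤ n}` of the coordinates of a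
Gelfand–Cetlin pattern. -/
def GCIdx (n : ℕ) : Set (ℕ × ℕ) := {p | 1 ≤ p.1 ∧ 1 ≤ p.2 ∧ p.1 + p.2 ≤ n}

/-- The entries of a Gelfand–Cetlin pattern `x`, extended by the boundary
condition `x_{i, n+1-i} = λ_i`. -/
def gcEntry (n : ℕ) (lam : ℕ → ℝ) (x : GCIdx n → ℝ) (p : ℕ × ℕ) : ℝ :=
  if h : p ∈ GCIdx n then x ⟨p, h⟩ else lam p.1

/-- The Gelfand–Cetlin polytope `P_λ`: the set of points `(x_{i,j})_{(i,j) ∈ I}`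
with `x_{i,j+1} ≥ x_{i,j} ≥ x_{i+1,j}` for all `(i,j) ∈ I`, where
`x_{i,n+1-i} = λ_i`. -/
def GCPoly (n : ℕ) (lam : ℕ → ℝ) : Set (GCIdx n → ℝ) :=
  {x | ∀ i j : ℕ, (i, j) ∈ GCIdx n →
    gcEntry n lam x (i, j) ≤ gcEntry n lam x (i, j + 1) ∧
    gcEntry n lam x (i + 1, j) ≤ gcEntry n lam x (i, j)}

/-- The subset of `P_λ` obtained by turning the inequalities
`x_{i,j+1} ≥ x_{i,j}` for `(i,j) ∈ SH` and `x_{i,j} ≥ x_{i+1,j}` for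
`(i,j) ∈ SV` into equalities. -/
def GCFaceOf (n : ℕ) (lam : ℕ → ℝ) (SH SV : Set (ℕ × ℕ)) : Set (GCIdx n → ℝ) :=
  {x | x ∈ GCPoly n lam ∧
    (∀ p ∈ SH, gcEntry n lam x (p.1, p.2 + 1) = gcEntry n lam x p) ∧
    (∀ p ∈ SV, gcEntry n lam x p = gcEntry n lam x (p.1 + 1, p.2))}

/-- A face of the GC polytope: a nonempty solution set of the system obtained
by replacing some of the defining inequalities by equalities. -/
def IsGCFace (n : ℕ) (lam : ℕ → ℝ) (F : Set (GCIdx n → ℝ)) : Prop :=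
  F.Nonempty ∧ ∃ SH SV : Set (ℕ × ℕ), SH ⊆ GCIdx n ∧ SV ⊆ GCIdx n ∧
    F = GCFaceOf n lam SH SV

/-- The dimension of (a face of) the GC polytope: the dimension of its affine span. -/
def GCdim (n : ℕ) (F : Set (GCIdx n → ℝ)) : ℕ :=
  Module.finrank ℝ (affineSpan ℝ F).direction

/-- `lam` (1-indexed) is weakly decreasing with block structure `k`: it is
constant on each block `(n_{i-1}, n_i]` and strictly decreases between
consecutive blocks. -/
def HasBlockStructure (s : ℕ) (k : ℕ → ℕ) (lam : ℕ → ℝ) : Prop :=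
  (∀ i < s, ∀ a b : ℕ, nseq k i < a → a ≤ b → b ≤ nseq k (i + 1) → lam a = lam b) ∧
  (∀ i : ℕ, 1 ≤ i → i < s → lam (nseq k i + 1) < lam (nseq k i))

/-- The edge set of the graph `φ(F)` associated to a subset `F` of the GC polytope. -/
def phiE (n : ℕ) (lam : ℕ → ℝ) (F : Set (GCIdx n → ℝ)) :
    Set ((ℕ × ℕ) × (ℕ × ℕ)) :=
  {e | (∃ i < n, e = ((0, i), (0, i + 1)) ∨ e = ((i, 0), (i + 1, 0))) ∨
    (∃ i j : ℕ, (i, j) ∈ GCIdx n ∧ e = ((i - 1, j), (i, j)) ∧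
      ∃ x ∈ F, gcEntry n lam x (i, j) < gcEntry n lam x (i, j + 1)) ∨
    (∃ i j : ℕ, (i, j) ∈ GCIdx n ∧ e = ((i, j - 1), (i, j)) ∧
      ∃ x ∈ F, gcEntry n lam x (i + 1, j) < gcEntry n lam x (i, j))}

/-- The graph `φ(F)`: its edges are given by `phiE` and its vertices are the
endpoints of its edges. -/
def phiGC (n : ℕ) (lam : ℕ → ℝ) (F : Set (GCIdx n → ℝ)) : LGraph where
  V := {v | ∃ e ∈ phiE n lam F, v = e.1 ∨ v = e.2}
  E := phiE n lam F

/-- The map `ψ`: for a subgraph `γ`, the set of points of `P_λ` where the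
inequalities corresponding to the missing edges of `γ` become equalities. -/
def psiGC (n : ℕ) (lam : ℕ → ℝ) (γ : LGraph) : Set (GCIdx n → ℝ) :=
  {x | x ∈ GCPoly n lam ∧ ∀ i j : ℕ, (i, j) ∈ GCIdx n →
    (((i - 1, j), (i, j)) ∉ γ.E → gcEntry n lam x (i, j) = gcEntry n lam x (i, j + 1)) ∧
    (((i, j - 1), (i, j)) ∉ γ.E → gcEntry n lam x (i, j) = gcEntry n lam x (i + 1, j))}
/-- The recursively defined point `x̄` of the proof of Lemma 2.6 (bijectivity):
`x̄_{i,j} = λ_i` if `i + j = n + 1`, and for `i + j ≤ n` it is determined from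
`x̄_{i,j+1}` and `x̄_{i+1,j}` according to which of the two edges
`((i-1,j),(i,j))`, `((i,j-1),(i,j))` belong to `E`. -/
def barX (n : ℕ) (lam : ℕ → ℝ) (E : Set ((ℕ × ℕ) × (ℕ × ℕ))) : ℕ → ℕ → ℝ
  | i, j =>
    if h1 : n + 1 ≤ i + j then lam i
    else if h2 : ((i - 1, j), (i, j)) ∈ E then
      if h3 : ((i, j - 1), (i, j)) ∈ E then
        (barX n lam E i (j + 1) + barX n lam E (i + 1) j) / 2
      else barX n lam E (i + 1) j
    else barX n lam E i (j + 1)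
  termination_by i j => n + 1 - (i + j)
  decreasing_by all_goals omega

/-- `α, β : ℕ → ℕ` encode an element
`w = ((α_1,β_1),…,(α_{s-1},β_{s-1})) ∈ W_{s-1}`, with the conventions
`α_0 = 0`, `β_0 = 1`, `α_s = 1`, `β_s = 0`. -/
def IsW (s : ℕ) (α β : ℕ → ℕ) : Prop :=
  (∀ i : ℕ, 1 ≤ i → i < s →
    (α i, β i) = (1, 0) ∨ (α i, β i) = (0, 1) ∨ (α i, β i) = (1, 1)) ∧
  α 0 = 0 ∧ β 0 = 1 ∧ α s = 1 ∧ β s = 0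

/-- The edge set of the subgraph `g_w` of `Γ_k`: the horizontal edge into the
terminal vertex `v_i` when `α_i = 1` and the vertical edge into `v_i` when
`β_i = 1`. -/
def gwE (s : ℕ) (k α β : ℕ → ℕ) : Set ((ℕ × ℕ) × (ℕ × ℕ)) :=
  {e | ∃ i ≤ s,
    (α i = 1 ∧
      e = ((nseq k i - 1, nseq k s - nseq k i), (nseq k i, nseq k s - nseq k i))) ∨
    (β i = 1 ∧
      e = ((nseq k i, nseq k s - nseq k i - 1), (nseq k i, nseq k s - nseq k i)))}

/-- The subgraph `g_w` of `Γ_k`. -/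
def gwGraph (s : ℕ) (k α β : ℕ → ℕ) : LGraph where
  V := {v | ∃ e ∈ gwE s k α β, v = e.1 ∨ v = e.2}
  E := gwE s k α β

/-- The interleaved sequence `r_w(k) * w̃` of length `2s - 1` (0-indexed):
entry `2j` is `k''_{j+1} = k_{j+1} + 1 - α_{j+1} - β_j` and entry `2j + 1` is
`w̃_{j+1} = α_{j+1} β_{j+1}`. -/
def rstar (s : ℕ) (k α β : ℕ → ℕ) (t : ℕ) : ℕ :=
  if t % 2 = 0 then k (t / 2) + 1 - α (t / 2 + 1) - β (t / 2)
  else α (t / 2 + 1) * β (t / 2 + 1)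

/-- `α`-value of one of the three symbols `(1,0), (0,1), (1,1)`,
encoded as `0, 1, 2 : Fin 3` respectively. -/
def aW3 (c : Fin 3) : ℕ := if c = 1 then 0 else 1

/-- `β`-value of one of the three symbols `(1,0), (0,1), (1,1)`,
encoded as `0, 1, 2 : Fin 3` respectively. -/
def bW3 (c : Fin 3) : ℕ := if c = 0 then 0 else 1

/-- The function `α` of the element of `W_{s-1}` encoded by
`c : Fin (s-1) → Fin 3` (with the conventions `α_0 = 0`, `α_s = 1`). -/
def alph (s : ℕ) (c : Fin (s - 1) → Fin 3) (i : ℕ) : ℕ :=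
  if i = 0 then 0 else if h : i - 1 < s - 1 then aW3 (c ⟨i - 1, h⟩) else 1

/-- The function `β` of the element of `W_{s-1}` encoded by
`c : Fin (s-1) → Fin 3` (with the conventions `β_0 = 1`, `β_s = 0`). -/
def bet (s : ℕ) (c : Fin (s - 1) → Fin 3) (i : ℕ) : ℕ :=
  if i = 0 then 1 else if h : i - 1 < s - 1 then bW3 (c ⟨i - 1, h⟩) else 0

/-- The interleaved sequence `r_w(k) * w̃` (of length `2s - 1`, 0-indexed) for
the element `w ∈ W_{s-1}` encoded by `c`. -/
def newk (s : ℕ) (c : Fin (s - 1) → Fin 3) (k : ℕ → ℕ) (t : ℕ) : ℕ :=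
  if t % 2 = 0 then k (t / 2) + 1 - alph s c (t / 2 + 1) - bet s c (t / 2)
  else alph s c (t / 2 + 1) * bet s c (t / 2 + 1)

/-- `|w| = Σ_{i=1}^{s-1} α_i β_i` for the element `w ∈ W_{s-1}` encoded by `c`. -/
def wsize (s : ℕ) (c : Fin (s - 1) → Fin 3) : ℕ :=
  ∑ j ∈ Finset.range (s - 1), alph s c (j + 1) * bet s c (j + 1)

/-- The subgraph `g_w` of `Γ_k` for the element `w ∈ W_{s-1}` encoded by `c`. -/
def gwGraph3 (s : ℕ) (k : ℕ → ℕ) (c : Fin (s - 1) → Fin 3) : LGraph :=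
  gwGraph s k (alph s c) (bet s c)

/-- Union of two grid graphs (union of vertex sets and of edge sets). -/
def ugraph (γ δ : LGraph) : LGraph := ⟨γ.V ∪ δ.V, γ.E ∪ δ.E⟩

/-- The generating function `F_k(t) = Σ_{γ face of Γ_k} t^{dim γ}` of the
`f`-vector of the ladder diagram `Γ_k`, as a formal power series in `t`:
the coefficient of `t^d` is the number of faces of `Γ_k` of dimension `d`. -/
def fpol (s : ℕ) (k : ℕ → ℕ) : PowerSeries ℤ :=
  PowerSeries.mk fun d =>
    (Set.ncard {γ : LGraph | IsLadderFace s k γ ∧ ldim γ = (d : ℤ)} : ℤ)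

/-- The operator `Π_{i=1}^{s-1} (∂/∂x_i + ∂/∂x_{i+1} + t ∂/∂y_i)` applied to a
polynomial in the variables `x_1, x_2, … , y_1, y_2, …` (the variable `x_{i+1}`
is `Sum.inl i` and `y_{i+1}` is `Sum.inr i`) over `ℚ[t]`. -/
def Lfold (s : ℕ) (f : MvPolynomial (ℕ ⊕ ℕ) (Polynomial ℚ)) :
    MvPolynomial (ℕ ⊕ ℕ) (Polynomial ℚ) :=
  (List.range (s - 1)).foldl
    (fun g i =>
      MvPolynomial.pderiv (Sum.inl i) g + MvPolynomial.pderiv (Sum.inl (i + 1)) g +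
        (Polynomial.X : Polynomial ℚ) • MvPolynomial.pderiv (Sum.inr i) g) f

/-- The operator `D_w = Π_{i=1}^{s-1} (∂/∂x_i)^{1-α_i} (∂/∂x_{i+1})^{1-β_i}
(t ∂/∂y_i)^{α_i β_i}` for the element `w ∈ W_{s-1}` encoded by
`c : Fin (s-1) → Fin 3` (`0 ↦ (1,0)`, `1 ↦ (0,1)`, `2 ↦ (1,1)`). -/
def DfoldC (s : ℕ) (c : Fin (s - 1) → Fin 3)
    (f : MvPolynomial (ℕ ⊕ ℕ) (Polynomial ℚ)) : MvPolynomial (ℕ ⊕ ℕ) (Polynomial ℚ) :=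
  (List.finRange (s - 1)).foldl
    (fun g i =>
      if c i = 0 then MvPolynomial.pderiv (Sum.inl ((i : ℕ) + 1)) g
      else if c i = 1 then MvPolynomial.pderiv (Sum.inl (i : ℕ)) g
      else (Polynomial.X : Polynomial ℚ) • MvPolynomial.pderiv (Sum.inr (i : ℕ)) g) f

/-- The operator `D_w` for the element `w ∈ W_{s-1}` encoded by `α, β : ℕ → ℕ`. -/
def DfoldW (s : ℕ) (α β : ℕ → ℕ)
    (f : MvPolynomial (ℕ ⊕ ℕ) (Polynomial ℚ)) : MvPolynomial (ℕ ⊕ ℕ) (Polynomial ℚ) :=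
  (List.range (s - 1)).foldl
    (fun g j =>
      if α (j + 1) = 1 ∧ β (j + 1) = 1 then
        (Polynomial.X : Polynomial ℚ) • MvPolynomial.pderiv (Sum.inr j) g
      else if α (j + 1) = 1 then MvPolynomial.pderiv (Sum.inl (j + 1)) g
      else MvPolynomial.pderiv (Sum.inl j) g) f

/-- Substitution of `0` for all the variables `y_j = Sum.inr j`. -/
def setYzero :
    MvPolynomial (ℕ ⊕ ℕ) (Polynomial ℚ) →ₐ[Polynomial ℚ] MvPolynomial (ℕ ⊕ ℕ) (Polynomial ℚ) :=
  MvPolynomial.aeval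
    (Sum.elim (fun i => MvPolynomial.X (Sum.inl i)) fun _ => (0 : MvPolynomial (ℕ ⊕ ℕ) (Polynomial ℚ)))
end

/-! ### Basic notions -/

/-- The horizontal edge into `(i,j)` belongs to `E`. -/
def HEd (E : Set ((ℕ × ℕ) × (ℕ × ℕ))) (i j : ℕ) : Prop := ((i - 1, j), (i, j)) ∈ E

/-- The vertical edge into `(i,j)` belongs to `E`. -/
def VEd (E : Set ((ℕ × ℕ) × (ℕ × ℕ))) (i j : ℕ) : Prop := ((i, j - 1), (i, j)) ∈ E

/-- Endpoints of a set of edges. -/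
def endpts (E : Set ((ℕ × ℕ) × (ℕ × ℕ))) : Set (ℕ × ℕ) := {v | ∃ e ∈ E, v = e.1 ∨ v = e.2}

/-- Local characterization of the faces of the ladder diagram. -/
structure GoodE (n : ℕ) (lam : ℕ → ℝ) (E : Set ((ℕ × ℕ) × (ℕ × ℕ))) : Prop where
  step : ∀ e ∈ E, gridStep e.1 e.2
  le : ∀ e ∈ E, e.2.1 + e.2.2 ≤ n
  bV : ∀ i < n, ((0, i), (0, i + 1)) ∈ E
  bH : ∀ i < n, ((i, 0), (i + 1, 0)) ∈ E
  inner : ∀ i j, 1 ≤ i → 1 ≤ j → i + j < n →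
    ((HEd E i j ∨ VEd E i j) ↔ (HEd E (i + 1) j ∨ VEd E i (j + 1)))
  top : ∀ i j, 1 ≤ i → 1 ≤ j → i + j = n → ((HEd E i j ∨ VEd E i j) ↔ lam (i + 1) < lam i)

lemma nseq_mono (k : ℕ → ℕ) : Monotone (nseq k) := by
  intro a b h
  exact Finset.sum_le_sum_of_subset (Finset.range_mono h)

lemma nseq_zero (k : ℕ → ℕ) : nseq k 0 = 0 := by simp [nseq]

lemma nseq_pos (s : ℕ) (hs : 1 ≤ s) (k : ℕ → ℕ) (hk : ∀ i < s, 0 < k i) : 0 < nseq k s := by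
  have h1 : nseq k 1 ≤ nseq k s := nseq_mono k hs
  have h2 : nseq k 1 = k 0 := by simp [nseq]
  have := hk 0 hs
  omega

lemma exists_block (k : ℕ → ℕ) (s i : ℕ) (hi : i < nseq k s) :
    ∃ t < s, nseq k t ≤ i ∧ i < nseq k (t + 1) := by
  induction s with
  | zero => simp [nseq_zero] at hi
  | succ s ih =>
    by_cases h : i < nseq k s
    · obtain ⟨t, ht, h1⟩ := ih h
      exact ⟨t, by omega, h1⟩
    · exact ⟨s, by omega, by omega, hi⟩

/-- The properties of `lam` that matter. -/
lemma lam_prop (s : ℕ) (k : ℕ → ℕ)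
    (lam : ℕ → ℝ) (hlam : HasBlockStructure s k lam) (i : ℕ) (h1 : 1 ≤ i) (h2 : i < nseq k s) :
    lam (i + 1) ≤ lam i ∧
      (lam (i + 1) < lam i ↔ ((i, nseq k s - i) : ℕ × ℕ) ∈ terminals s k) := by
  obtain ⟨t, hts, ht1, ht2⟩ := exists_block k s i h2
  rcases ht1.eq_or_lt with h | h
  · have ht0 : 1 ≤ t := by
      rcases Nat.eq_zero_or_pos t with h0 | h0
      · subst h0; rw [nseq_zero] at h; omega
      · exact h0
    have := hlam.2 t ht0 hts
    rw [h] at this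
    refine ⟨this.le, ⟨fun _ => ⟨t, hts.le, by rw [h]⟩, fun _ => this⟩⟩
  · have he := hlam.1 t hts i (i + 1) h (by omega) (by omega)
    refine ⟨he.ge, ⟨fun hh => absurd hh (by rw [he]; exact lt_irrefl _), ?_⟩⟩
    rintro ⟨t', ht', heq⟩
    simp only [Prod.mk.injEq] at heq
    exfalso
    rcases le_or_gt t' t with hc | hc
    · have := nseq_mono k hc; omega
    · have := nseq_mono k (show t + 1 ≤ t' from hc); omega

lemma terminals_sum (s : ℕ) (k : ℕ → ℕ) (v : ℕ × ℕ) (hv : v ∈ terminals s k) :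
    v.1 + v.2 = nseq k s := by
  obtain ⟨i, hi, rfl⟩ := hv
  have := nseq_mono k hi
  simp only
  omega

lemma ladderV_sum (s : ℕ) (k : ℕ → ℕ) (v : ℕ × ℕ) (hv : v ∈ ladderV s k) :
    v.1 + v.2 ≤ nseq k s := by
  obtain ⟨t, ht, h⟩ := hv
  have := terminals_sum s k t ht
  omega

lemma ladderV_terminal (s : ℕ) (k : ℕ → ℕ) (v : ℕ × ℕ) (hv : v ∈ ladderV s k)
    (h : v.1 + v.2 = nseq k s) : v ∈ terminals s k := by
  obtain ⟨t, ht, h1⟩ := hv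
  have := terminals_sum s k t ht
  have : v = t := Prod.ext (by omega) (by omega)
  rwa [this]

/-! ### Good edge sets are ladder faces -/

lemma GoodE.out {n lam E} (g : GoodE n lam E) (v : ℕ × ℕ) (hv : v ∈ endpts E)
    (hn : v.1 + v.2 < n) : ∃ w, (v, w) ∈ E := by
  obtain ⟨e, he, rfl | rfl⟩ := hv
  · exact ⟨e.2, he⟩
  · obtain ⟨⟨a, b⟩, ⟨i, j⟩⟩ := e
    simp only at hn ⊢
    rcases Nat.eq_zero_or_pos i with hi | hi
    · subst hi; exact ⟨_, g.bV j (by omega)⟩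
    rcases Nat.eq_zero_or_pos j with hj | hj
    · subst hj; exact ⟨_, g.bH i (by omega)⟩
    have h1 : HEd E i j ∨ VEd E i j := by
      rcases g.step _ he with h | h
      · simp only [Prod.mk.injEq] at h
        obtain ⟨rfl, rfl⟩ := h
        left; unfold HEd
        simpa using he
      · simp only [Prod.mk.injEq] at h
        obtain ⟨rfl, rfl⟩ := h
        right; unfold VEd
        simpa using he
    rcases (g.inner i j hi hj hn).1 h1 with h | h
    · exact ⟨_, h⟩
    · exact ⟨_, h⟩

lemma GoodE.inn {n lam E} (g : GoodE n lam E) (v : ℕ × ℕ) (hv : v ∈ endpts E)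
    (hn : 0 < v.1 + v.2) : ∃ w, (w, v) ∈ E := by
  obtain ⟨e, he, rfl | rfl⟩ := hv
  · obtain ⟨⟨i, j⟩, ⟨a, b⟩⟩ := e
    have hs := g.step _ he
    have hle := g.le _ he
    simp only [gridStep, Prod.mk.injEq] at hs hle hn ⊢
    rcases Nat.eq_zero_or_pos i with hi | hi
    · subst hi
      obtain ⟨j, rfl⟩ : ∃ j', j = j' + 1 := ⟨j - 1, by omega⟩
      exact ⟨_, g.bV j (by omega)⟩
    rcases Nat.eq_zero_or_pos j with hj | hj
    · subst hj
      obtain ⟨i, rfl⟩ : ∃ j', i = j' + 1 := ⟨i - 1, by omega⟩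
      exact ⟨_, g.bH i (by omega)⟩
    have h1 : HEd E (i + 1) j ∨ VEd E i (j + 1) := by
      rcases hs with h | h
      · left; unfold HEd; rw [h.1, h.2] at he; simpa using he
      · right; unfold VEd; rw [h.1, h.2] at he; simpa using he
    rcases (g.inner i j hi hj (by omega)).2 h1 with h | h
    · exact ⟨_, h⟩
    · exact ⟨_, h⟩
  · exact ⟨e.1, he⟩

lemma GoodE.sum {n lam E} (g : GoodE n lam E) {v w : ℕ × ℕ} (h : (v, w) ∈ E) :
    w.1 + w.2 = v.1 + v.2 + 1 := by
  rcases g.step _ h with h | h <;> simp only at h <;> rw [h] <;> simp only <;> omega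

lemma GoodE.back {n lam E} (g : GoodE n lam E) (N : ℕ) : ∀ v : ℕ × ℕ, v ∈ endpts E →
    v.1 + v.2 = N → ∃ f : ℕ → ℕ × ℕ, f 0 = (0, 0) ∧ f N = v ∧ ∀ i < N, (f i, f (i + 1)) ∈ E := by
  induction N with
  | zero =>
    intro v _ h
    refine ⟨fun _ => v, Prod.ext (by simp only; omega) (by simp only; omega), rfl, by simp⟩
  | succ N ih =>
    intro v hv h
    obtain ⟨w, hw⟩ := g.inn v hv (by omega)
    have := g.sum hw
    obtain ⟨f, h0, hN, hf⟩ := ih w ⟨_, hw, Or.inl rfl⟩ (by omega)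
    refine ⟨Function.update f (N + 1) v, ?_, by simp, ?_⟩
    · rw [Function.update_of_ne (by omega), h0]
    · intro i hi
      rw [Function.update_of_ne (by omega)]
      by_cases hc : i = N
      · subst hc; simpa [hN] using hw
      · rw [Function.update_of_ne (by omega)]
        exact hf i (by omega)

lemma GoodE.fwd {n lam E} (g : GoodE n lam E) (d : ℕ) : ∀ (N : ℕ) (f : ℕ → ℕ × ℕ), N + d = n →
    f 0 = (0, 0) → f N ∈ endpts E → (f N).1 + (f N).2 = N → (∀ i < N, (f i, f (i + 1)) ∈ E) →
    ∃ f' : ℕ → ℕ × ℕ, (∀ i ≤ N, f' i = f i) ∧ (∀ i < n, (f' i, f' (i + 1)) ∈ E) := by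
  induction d with
  | zero =>
    intro N f hN _ _ _ h
    exact ⟨f, fun _ _ => rfl, by rwa [← hN]⟩
  | succ d ih =>
    intro N f hN h0 hv hs h
    obtain ⟨w, hw⟩ := g.out _ hv (by omega)
    have := g.sum hw
    obtain ⟨f', h1, h2⟩ := ih (N + 1) (Function.update f (N + 1) w) (by omega)
      (by rw [Function.update_of_ne (by omega), h0])
      (by rw [Function.update_self]; exact ⟨_, hw, Or.inr rfl⟩)
      (by rw [Function.update_self]; omega)
      (by
        intro i hi
        rw [Function.update_of_ne (by omega)]
        by_cases hc : i = N
        · subst hc; simpa using hw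
        · rw [Function.update_of_ne (by omega)]
          exact h i (by omega))
    refine ⟨f', fun i hi => ?_, h2⟩
    rw [h1 i (by omega), Function.update_of_ne (by omega)]

lemma path_sum (m : ℕ) (f : ℕ → ℕ × ℕ) (h0 : f 0 = (0, 0))
    (hf : ∀ i < m, gridStep (f i) (f (i + 1))) : ∀ i ≤ m, (f i).1 + (f i).2 = i := by
  intro i
  induction i with
  | zero => intro _; simp [h0]
  | succ i ih =>
    intro hi
    have := ih (by omega)
    rcases hf i (by omega) with h | h <;> rw [h] <;> simp only <;> omega

lemma path_mono (m : ℕ) (f : ℕ → ℕ × ℕ)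
    (hf : ∀ i < m, gridStep (f i) (f (i + 1))) (i j : ℕ) (hij : i ≤ j) :
    j ≤ m → (f i).1 ≤ (f j).1 ∧ (f i).2 ≤ (f j).2 := by
  induction j, hij using Nat.le_induction with
  | base => intro _; exact ⟨le_rfl, le_rfl⟩
  | succ j hj ih =>
    intro hm
    have := ih (by omega)
    rcases hf j (by omega) with h | h <;> rw [h] <;> simp only <;> omega

/-- A path of length `n` in a good edge set is a positive path. -/
lemma GoodE.positive {s k lam E} (hs : 1 ≤ s) (hk : ∀ i < s, 0 < k i)
    (hlam : HasBlockStructure s k lam) (g : GoodE (nseq k s) lam E) (f : ℕ → ℕ × ℕ)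
    (h0 : f 0 = (0, 0)) (hf : ∀ i < nseq k s, (f i, f (i + 1)) ∈ E) :
    IsPositivePath s k ⟨{v | ∃ i ≤ nseq k s, v = f i},
      {e | ∃ i < nseq k s, e = (f i, f (i + 1))}⟩ := by
  have hst : ∀ i < nseq k s, gridStep (f i) (f (i + 1)) := fun i hi => g.step _ (hf i hi)
  have hn := nseq_pos s hs k hk
  have hsum := path_sum _ f h0 hst
  have hter : f (nseq k s) ∈ terminals s k := by
    have hS := hsum _ le_rfl
    have hlast := hf (nseq k s - 1) (by omega)
    rw [Nat.sub_add_cancel hn] at hlast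
    have hst' := g.step _ hlast
    generalize f (nseq k s) = v at *
    generalize f (nseq k s - 1) = w at *
    obtain ⟨i, j⟩ := v
    obtain ⟨a, b⟩ := w
    simp only at hS
    rcases Nat.eq_zero_or_pos i with hi | hi
    · exact ⟨0, by omega, by rw [nseq_zero]; simp only [Prod.mk.injEq]; omega⟩
    rcases Nat.eq_zero_or_pos j with hj | hj
    · exact ⟨s, le_rfl, by simp only [Prod.mk.injEq]; omega⟩
    have h1 : HEd E i j ∨ VEd E i j := by
      simp only [gridStep, Prod.mk.injEq] at hst'
      rcases hst' with h | h
      · obtain ⟨rfl, rfl⟩ := h; left; unfold HEd; simpa using hlast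
      · obtain ⟨rfl, rfl⟩ := h; right; unfold VEd; simpa using hlast
    have h2 := (g.top i j hi hj hS).1 h1
    have h3 := ((lam_prop s k lam hlam i hi (by omega)).2).1 h2
    rwa [show nseq k s - i = j by omega] at h3
  refine ⟨nseq k s, f, h0, hter, hst, ?_, rfl, rfl⟩
  intro i hi
  exact ⟨_, hter, path_mono _ f hst i _ hi le_rfl⟩

lemma GoodE.through {s k lam E} (hs : 1 ≤ s) (hk : ∀ i < s, 0 < k i)
    (g : GoodE (nseq k s) lam E) (e : (ℕ × ℕ) × (ℕ × ℕ)) (he : e ∈ E) :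
    ∃ f : ℕ → ℕ × ℕ, f 0 = (0, 0) ∧ (∀ i < nseq k s, (f i, f (i + 1)) ∈ E) ∧
      ∃ i < nseq k s, e = (f i, f (i + 1)) := by
  obtain ⟨v, w⟩ := e
  have hsum := g.sum he
  have hle := g.le _ he
  simp only at hle
  obtain ⟨f, h0, hN, hf⟩ := g.back _ v ⟨_, he, Or.inl rfl⟩ rfl
  set N := v.1 + v.2 with hNdef
  have hN1 : ∀ i < N + 1, (Function.update f (N + 1) w i, Function.update f (N + 1) w (i + 1)) ∈ E := by
    intro i hi
    rw [Function.update_of_ne (by omega)]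
    by_cases hc : i = N
    · subst hc; rw [Function.update_self, hN]; exact he
    · rw [Function.update_of_ne (by omega)]
      exact hf i (by omega)
  obtain ⟨f', h1, h2⟩ := g.fwd (nseq k s - (N + 1)) (N + 1) (Function.update f (N + 1) w) (by omega)
    (by rw [Function.update_of_ne (by omega), h0])
    (by rw [Function.update_self]; exact ⟨_, he, Or.inr rfl⟩)
    (by rw [Function.update_self]; omega) hN1
  refine ⟨f', ?_, h2, N, by omega, ?_⟩
  · rw [h1 0 (by omega), Function.update_of_ne (by omega), h0]
  · rw [h1 N (by omega), h1 (N + 1) le_rfl, Function.update_self,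
      Function.update_of_ne (by omega), hN]

lemma GoodE.isLadderFace {s k lam E} (hs : 1 ≤ s) (hk : ∀ i < s, 0 < k i)
    (hlam : HasBlockStructure s k lam) (g : GoodE (nseq k s) lam E) :
    IsLadderFace s k ⟨endpts E, E⟩ := by
  have hn := nseq_pos s hs k hk
  refine ⟨?_, {p | IsPositivePath s k p ∧ p.E ⊆ E ∧ p.V ⊆ endpts E}, fun p hp => hp.1, ?_, ?_⟩
  · intro v hv
    have hS := terminals_sum s k v hv
    obtain ⟨i, j⟩ := v
    simp only at hS ⊢
    rcases Nat.eq_zero_or_pos i with hi | hi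
    · subst hi
      refine ⟨_, g.bV (j - 1) (by omega), Or.inr ?_⟩
      show ((0, j) : ℕ × ℕ) = (0, j - 1 + 1)
      rw [Nat.sub_add_cancel (by omega)]
    rcases Nat.eq_zero_or_pos j with hj | hj
    · subst hj
      refine ⟨_, g.bH (i - 1) (by omega), Or.inr ?_⟩
      show ((i, 0) : ℕ × ℕ) = (i - 1 + 1, 0)
      rw [Nat.sub_add_cancel (by omega)]
    have h1 := ((lam_prop s k lam hlam i hi (by omega)).2).2
      (by rwa [show nseq k s - i = j by omega])
    rcases (g.top i j hi hj hS).2 h1 with h | h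
    · exact ⟨_, h, Or.inr rfl⟩
    · exact ⟨_, h, Or.inr rfl⟩
  all_goals
    have key : ∀ e ∈ E, ∃ p : LGraph, (IsPositivePath s k p ∧ p.E ⊆ E ∧ p.V ⊆ endpts E) ∧
        e ∈ p.E ∧ e.1 ∈ p.V ∧ e.2 ∈ p.V := by
      intro e he
      obtain ⟨f, h0, hf, i, hi, rfl⟩ := g.through hs hk e he
      refine ⟨_, ⟨g.positive hs hk hlam f h0 hf, ?_, ?_⟩, ⟨i, hi, rfl⟩, ⟨i, hi.le, rfl⟩,
        ⟨i + 1, hi, rfl⟩⟩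
      · rintro _ ⟨j, hj, rfl⟩
        exact hf j hj
      · rintro _ ⟨j, hj, rfl⟩
        rcases hj.eq_or_lt with h | h
        · refine ⟨_, hf (j - 1) (by omega), Or.inr ?_⟩
          simp only
          rw [Nat.sub_add_cancel (by omega)]
        · exact ⟨_, hf j h, Or.inl rfl⟩
  · ext v
    simp only [Set.mem_iUnion, Set.mem_ofPred_eq, exists_prop]
    constructor
    · rintro ⟨e, he, rfl | rfl⟩
      · obtain ⟨p, hp, h⟩ := key e he
        exact ⟨p, hp, h.2.1⟩
      · obtain ⟨p, hp, h⟩ := key e he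
        exact ⟨p, hp, h.2.2⟩
    · rintro ⟨p, hp, h⟩
      exact hp.2.2 h
  · ext e
    simp only [Set.mem_iUnion, Set.mem_ofPred_eq, exists_prop]
    constructor
    · intro he
      obtain ⟨p, hp, h⟩ := key e he
      exact ⟨p, hp, h.1⟩
    · rintro ⟨p, hp, h⟩
      exact hp.2.1 h

/-! ### Ladder faces are good -/

lemma IsLadderFace.good {s k lam} (hs : 1 ≤ s) (hk : ∀ i < s, 0 < k i)
    (hlam : HasBlockStructure s k lam) (γ : LGraph) (hγ : IsLadderFace s k γ) :
    GoodE (nseq k s) lam γ.E ∧ γ.V = endpts γ.E := by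
  have hn := nseq_pos s hs k hk
  obtain ⟨hT, P, hP, hV, hE⟩ := hγ
  have getV : ∀ v ∈ γ.V, ∃ f : ℕ → ℕ × ℕ, f 0 = (0, 0) ∧
      (∀ i < nseq k s, gridStep (f i) (f (i + 1))) ∧
      (∀ i ≤ nseq k s, f i ∈ ladderV s k) ∧ (∀ i < nseq k s, (f i, f (i + 1)) ∈ γ.E) ∧
      v.1 + v.2 ≤ nseq k s ∧ v = f (v.1 + v.2) := by
    intro v hv
    rw [hV] at hv
    simp only [Set.mem_iUnion, exists_prop] at hv
    obtain ⟨p, hp, hv⟩ := hv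
    obtain ⟨m, f, h0, hm, hst, hl, hpV, hpE⟩ := hP p hp
    have hs1 := path_sum m f h0 hst
    have : m = nseq k s := by rw [← hs1 m le_rfl]; exact terminals_sum s k _ hm
    subst this
    rw [hpV] at hv
    obtain ⟨i, hi, rfl⟩ := hv
    refine ⟨f, h0, hst, hl, ?_, ?_, ?_⟩
    · intro j hj
      rw [hE]
      simp only [Set.mem_iUnion, exists_prop]
      exact ⟨p, hp, by rw [hpE]; exact ⟨j, hj, rfl⟩⟩
    · rw [hs1 i hi]; exact hi
    · rw [hs1 i hi]
  have getE : ∀ e ∈ γ.E, ∃ f : ℕ → ℕ × ℕ, f 0 = (0, 0) ∧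
      (∀ i < nseq k s, gridStep (f i) (f (i + 1))) ∧
      (∀ i ≤ nseq k s, f i ∈ ladderV s k) ∧ (∀ i < nseq k s, (f i, f (i + 1)) ∈ γ.E) ∧
      e.1.1 + e.1.2 < nseq k s ∧ e = (f (e.1.1 + e.1.2), f (e.1.1 + e.1.2 + 1)) ∧
      e.1 ∈ γ.V ∧ e.2 ∈ γ.V := by
    intro v hv
    rw [hE] at hv
    simp only [Set.mem_iUnion, exists_prop] at hv
    obtain ⟨p, hp, hv⟩ := hv
    obtain ⟨m, f, h0, hm, hst, hl, hpV, hpE⟩ := hP p hp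
    have hs1 := path_sum m f h0 hst
    have : m = nseq k s := by rw [← hs1 m le_rfl]; exact terminals_sum s k _ hm
    subst this
    rw [hpE] at hv
    obtain ⟨i, hi, rfl⟩ := hv
    refine ⟨f, h0, hst, hl, ?_, ?_, ?_, ?_, ?_⟩
    · intro j hj
      rw [hE]
      simp only [Set.mem_iUnion, exists_prop]
      exact ⟨p, hp, by rw [hpE]; exact ⟨j, hj, rfl⟩⟩
    · rw [hs1 i hi.le]; exact hi
    · rw [hs1 i hi.le]
    · rw [hV]
      simp only [Set.mem_iUnion, exists_prop]
      exact ⟨p, hp, by rw [hpV]; exact ⟨i, hi.le, rfl⟩⟩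
    · rw [hV]
      simp only [Set.mem_iUnion, exists_prop]
      exact ⟨p, hp, by rw [hpV]; exact ⟨i + 1, hi, rfl⟩⟩
  have inE : ∀ v ∈ γ.V, 0 < v.1 + v.2 → ∃ w, gridStep w v ∧ (w, v) ∈ γ.E := by
    intro v hv h
    obtain ⟨f, h0, hst, hl, hfE, hle, heq⟩ := getV v hv
    refine ⟨f (v.1 + v.2 - 1), ?_, ?_⟩
    · have := hst (v.1 + v.2 - 1) (by omega)
      rwa [Nat.sub_add_cancel h, ← heq] at this
    · have := hfE (v.1 + v.2 - 1) (by omega)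
      rwa [Nat.sub_add_cancel h, ← heq] at this
  have outE : ∀ v ∈ γ.V, v.1 + v.2 < nseq k s → ∃ w, gridStep v w ∧ (v, w) ∈ γ.E := by
    intro v hv h
    obtain ⟨f, h0, hst, hl, hfE, hle, heq⟩ := getV v hv
    refine ⟨f (v.1 + v.2 + 1), ?_, ?_⟩
    · have := hst (v.1 + v.2) h
      rwa [← heq] at this
    · have := hfE (v.1 + v.2) h
      rwa [← heq] at this
  have inHV : ∀ i j, (i, j) ∈ γ.V → 0 < i + j → HEd γ.E i j ∨ VEd γ.E i j := by
    intro i j hv h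
    obtain ⟨⟨a, b⟩, h1, h2⟩ := inE _ hv h
    simp only [gridStep, Prod.mk.injEq] at h1
    rcases h1 with h | h
    · obtain ⟨rfl, rfl⟩ := h; left; unfold HEd; simpa using h2
    · obtain ⟨rfl, rfl⟩ := h; right; unfold VEd; simpa using h2
  refine ⟨⟨?_, ?_, ?_, ?_, ?_, ?_⟩, ?_⟩
  · intro e he
    obtain ⟨f, h0, hst, hl, hfE, hlt, heq, -⟩ := getE e he
    rw [heq]
    exact hst _ hlt
  · intro e he
    obtain ⟨f, h0, hst, hl, hfE, hlt, heq, -⟩ := getE e he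
    have hs1 := path_sum _ f h0 hst (e.1.1 + e.1.2 + 1) hlt
    have : e.2 = f (e.1.1 + e.1.2 + 1) := congrArg Prod.snd heq
    rw [this, hs1]
    exact hlt
  · intro i hi
    have h1 : ((0, nseq k s) : ℕ × ℕ) ∈ γ.V := hT ⟨0, by omega, by rw [nseq_zero]; simp⟩
    obtain ⟨f, h0, hst, hl, hfE, hle, heq⟩ := getV _ h1
    simp only [zero_add] at heq
    have hf : ∀ j ≤ nseq k s, f j = (0, j) := by
      intro j hj
      have a1 := path_sum _ f h0 hst j hj
      have a2 := path_mono _ f hst j _ hj le_rfl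
      rw [← heq] at a2
      simp only at a2
      exact Prod.ext (by simp only; omega) (by simp only; omega)
    have := hfE i hi
    rwa [hf i hi.le, hf (i + 1) hi] at this
  · intro i hi
    have h1 : ((nseq k s, 0) : ℕ × ℕ) ∈ γ.V := hT ⟨s, le_rfl, by simp⟩
    obtain ⟨f, h0, hst, hl, hfE, hle, heq⟩ := getV _ h1
    simp only [add_zero] at heq
    have hf : ∀ j ≤ nseq k s, f j = (j, 0) := by
      intro j hj
      have a1 := path_sum _ f h0 hst j hj
      have a2 := path_mono _ f hst j _ hj le_rfl
      rw [← heq] at a2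
      simp only at a2
      exact Prod.ext (by simp only; omega) (by simp only; omega)
    have := hfE i hi
    rwa [hf i hi.le, hf (i + 1) hi] at this
  · intro i j hi hj hij
    constructor
    · intro h
      have hv : (i, j) ∈ γ.V := by
        rcases h with h | h
        · obtain ⟨-, -, -, -, -, -, -, -, h⟩ := getE _ h; exact h
        · obtain ⟨-, -, -, -, -, -, -, -, h⟩ := getE _ h; exact h
      obtain ⟨w, h1 | h1, h2⟩ := outE _ hv hij
      · left; rw [h1] at h2; exact h2
      · right; rw [h1] at h2; exact h2
    · intro h
      have hv : (i, j) ∈ γ.V := by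
        rcases h with h | h
        · obtain ⟨-, -, -, -, -, -, -, h, -⟩ := getE _ h; exact h
        · obtain ⟨-, -, -, -, -, -, -, h, -⟩ := getE _ h; exact h
      exact inHV i j hv (by omega)
  · intro i j hi hj hij
    rw [(lam_prop s k lam hlam i hi (by omega)).2, show nseq k s - i = j by omega]
    constructor
    · intro h
      have hv : (i, j) ∈ γ.V := by
        rcases h with h | h
        · obtain ⟨-, -, -, -, -, -, -, -, h⟩ := getE _ h; exact h
        · obtain ⟨-, -, -, -, -, -, -, -, h⟩ := getE _ h; exact h
      obtain ⟨f, h0, hst, hl, hfE, hle, heq⟩ := getV _ hv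
      apply ladderV_terminal s k _ _ hij
      rw [heq]
      exact hl _ hle
    · intro h
      exact inHV i j (hT h) (by omega)
  · ext v
    constructor
    · intro hv
      rcases Nat.eq_zero_or_pos (v.1 + v.2) with h | h
      · obtain ⟨w, -, hw⟩ := outE v hv (by omega)
        exact ⟨_, hw, Or.inl rfl⟩
      · obtain ⟨w, -, hw⟩ := inE v hv h
        exact ⟨_, hw, Or.inr rfl⟩
    · rintro ⟨e, he, rfl | rfl⟩
      · obtain ⟨-, -, -, -, -, -, -, h, -⟩ := getE _ he; exact h
      · obtain ⟨-, -, -, -, -, -, -, -, h⟩ := getE _ he; exact h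

/-! ### The graph `φ(F)` -/

lemma HEd_phiE {n lam F i j} (h : (i, j) ∈ GCIdx n) :
    HEd (phiE n lam F) i j ↔ ∃ x ∈ F, gcEntry n lam x (i, j) < gcEntry n lam x (i, j + 1) := by
  constructor
  · rintro (⟨a, ha, h1 | h1⟩ | ⟨a, b, hab, h1, h2⟩ | ⟨a, b, hab, h1, h2⟩)
    · obtain ⟨h3, h4, -⟩ := h
      simp only [Prod.mk.injEq] at h1 h3 h4; omega
    · obtain ⟨h3, h4, -⟩ := h
      simp only [Prod.mk.injEq] at h1 h3 h4; omega
    · simp only [Prod.mk.injEq] at h1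
      obtain ⟨-, rfl, rfl⟩ := h1
      exact h2
    · obtain ⟨h3, h4, -⟩ := h
      simp only [Prod.mk.injEq] at h1 h3 h4; omega
  · intro hx
    exact Or.inr (Or.inl ⟨i, j, h, rfl, hx⟩)

lemma VEd_phiE {n lam F i j} (h : (i, j) ∈ GCIdx n) :
    VEd (phiE n lam F) i j ↔ ∃ x ∈ F, gcEntry n lam x (i + 1, j) < gcEntry n lam x (i, j) := by
  constructor
  · rintro (⟨a, ha, h1 | h1⟩ | ⟨a, b, hab, h1, h2⟩ | ⟨a, b, hab, h1, h2⟩)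
    · obtain ⟨h3, h4, -⟩ := h
      simp only [Prod.mk.injEq] at h1 h3 h4; omega
    · obtain ⟨h3, h4, -⟩ := h
      simp only [Prod.mk.injEq] at h1 h3 h4; omega
    · obtain ⟨h3, h4, -⟩ := h
      simp only [Prod.mk.injEq] at h1 h3 h4; omega
    · simp only [Prod.mk.injEq] at h1
      obtain ⟨-, rfl, rfl⟩ := h1
      exact h2
  · intro hx
    exact Or.inr (Or.inr ⟨i, j, h, rfl, hx⟩)

lemma gcEntry_top {n lam} (x : GCIdx n → ℝ) (i j : ℕ) (h : n < i + j) :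
    gcEntry n lam x (i, j) = lam i := by
  unfold gcEntry
  rw [dif_neg]
  rintro ⟨-, -, h3⟩
  simp only at h3
  omega

lemma phiE_good {n lam F} (hF : F ⊆ GCPoly n lam) (hne : F.Nonempty) :
    GoodE n lam (phiE n lam F) := by
  refine ⟨?_, ?_, ?_, ?_, ?_, ?_⟩
  · rintro e (⟨a, ha, rfl | rfl⟩ | ⟨a, b, hab, rfl, -⟩ | ⟨a, b, hab, rfl, -⟩)
    · right; rfl
    · left; rfl
    · obtain ⟨h3, h4, -⟩ := hab
      left; exact Prod.ext (by simp only at *; omega) rfl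
    · obtain ⟨h3, h4, -⟩ := hab
      right; exact Prod.ext rfl (by simp only at *; omega)
  · rintro e (⟨a, ha, rfl | rfl⟩ | ⟨a, b, hab, rfl, -⟩ | ⟨a, b, hab, rfl, -⟩)
    · simp only; omega
    · simp only; omega
    · exact hab.2.2
    · exact hab.2.2
  · intro i hi
    exact Or.inl ⟨i, hi, Or.inl rfl⟩
  · intro i hi
    exact Or.inl ⟨i, hi, Or.inr rfl⟩
  · intro i j hi hj hij
    have m0 : (i, j) ∈ GCIdx n := ⟨hi, hj, hij.le⟩
    have m1 : (i + 1, j) ∈ GCIdx n := ⟨by simp, hj, by simp only; omega⟩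
    have m2 : (i, j + 1) ∈ GCIdx n := ⟨hi, by simp, by simp only; omega⟩
    rw [HEd_phiE m0, VEd_phiE m0, HEd_phiE m1, VEd_phiE m2]
    constructor
    · intro h
      obtain ⟨x, hx, hlt⟩ : ∃ x ∈ F, gcEntry n lam x (i + 1, j) < gcEntry n lam x (i, j + 1) := by
        rcases h with ⟨x, hx, h⟩ | ⟨x, hx, h⟩
        · exact ⟨x, hx, (hF hx i j m0).2.trans_lt h⟩
        · exact ⟨x, hx, h.trans_le (hF hx i j m0).1⟩
      rcases lt_or_ge (gcEntry n lam x (i + 1, j)) (gcEntry n lam x (i + 1, j + 1)) with hc | hc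
      · exact Or.inl ⟨x, hx, hc⟩
      · exact Or.inr ⟨x, hx, hc.trans_lt hlt⟩
    · intro h
      obtain ⟨x, hx, hlt⟩ : ∃ x ∈ F, gcEntry n lam x (i + 1, j) < gcEntry n lam x (i, j + 1) := by
        rcases h with ⟨x, hx, h⟩ | ⟨x, hx, h⟩
        · exact ⟨x, hx, h.trans_le (hF hx i (j + 1) m2).2⟩
        · exact ⟨x, hx, (hF hx (i + 1) j m1).1.trans_lt h⟩
      rcases lt_or_ge (gcEntry n lam x (i, j)) (gcEntry n lam x (i, j + 1)) with hc | hc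
      · exact Or.inl ⟨x, hx, hc⟩
      · exact Or.inr ⟨x, hx, hlt.trans_le hc⟩
  · intro i j hi hj hij
    have m0 : (i, j) ∈ GCIdx n := ⟨hi, hj, hij.le⟩
    rw [HEd_phiE m0, VEd_phiE m0]
    constructor
    · intro h
      rcases h with ⟨x, hx, h⟩ | ⟨x, hx, h⟩
      · have h2 := (hF hx i j m0).2
        rw [gcEntry_top x i (j + 1) (by omega)] at h
        rw [gcEntry_top x (i + 1) j (by omega)] at h2
        linarith
      · have h2 := (hF hx i j m0).1
        rw [gcEntry_top x i (j + 1) (by omega)] at h2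
        rw [gcEntry_top x (i + 1) j (by omega)] at h
        linarith
    · intro h
      obtain ⟨x, hx⟩ := hne
      rcases lt_or_ge (gcEntry n lam x (i, j)) (gcEntry n lam x (i, j + 1)) with hc | hc
      · exact Or.inl ⟨x, hx, hc⟩
      · right
        refine ⟨x, hx, ?_⟩
        rw [gcEntry_top x i (j + 1) (by omega)] at hc
        rw [gcEntry_top x (i + 1) j (by omega)]
        linarith

/-! ### The point `x̄` -/

/-- The point of the polytope given by `barX`. -/
noncomputable def barPt (n : ℕ) (lam : ℕ → ℝ) (E : Set ((ℕ × ℕ) × (ℕ × ℕ))) : GCIdx n → ℝ :=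
  fun p => barX n lam E p.1.1 p.1.2

lemma gcEntry_barPt {n lam E i j} (hi : 1 ≤ i) (hj : 1 ≤ j) :
    gcEntry n lam (barPt n lam E) (i, j) = barX n lam E i j := by
  unfold gcEntry
  split_ifs with h
  · rfl
  · have : n + 1 ≤ i + j := by
      by_contra hc
      exact h ⟨hi, hj, by simp only; omega⟩
    rw [barX, dif_pos this]

lemma barX_spec {n lam E} (g : GoodE n lam E)
    (hl : ∀ i, 1 ≤ i → i < n → lam (i + 1) ≤ lam i) (d : ℕ) : ∀ i j, 1 ≤ i → 1 ≤ j →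
    i + j + d = n →
    barX n lam E i j ≤ barX n lam E i (j + 1) ∧ barX n lam E (i + 1) j ≤ barX n lam E i j ∧
    (HEd E i j ↔ barX n lam E i j < barX n lam E i (j + 1)) ∧
    (VEd E i j ↔ barX n lam E (i + 1) j < barX n lam E i j) := by
  induction d with
  | zero =>
    intro i j hi hj hij
    have ht := g.top i j hi hj (by omega)
    have hli := hl i hi (by omega)
    have e1 : barX n lam E i (j + 1) = lam i := by rw [barX, dif_pos (by omega)]
    have e2 : barX n lam E (i + 1) j = lam (i + 1) := by rw [barX, dif_pos (by omega)]
    have e0 : barX n lam E i j = if HEd E i j then (if VEd E i j then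
        (barX n lam E i (j + 1) + barX n lam E (i + 1) j) / 2 else barX n lam E (i + 1) j)
        else barX n lam E i (j + 1) := by
      rw [barX, dif_neg (by omega)]; rfl
    rw [e0, e1, e2]
    by_cases h2 : HEd E i j <;> by_cases h3 : VEd E i j <;>
      simp only [h2, h3, if_true, if_false, true_or, or_true, or_false, false_or, true_iff,
        false_iff, or_self, not_lt] at ht ⊢ <;> refine ⟨?_, ?_, ?_, ?_⟩ <;> linarith
  | succ d ih =>
    intro i j hi hj hij
    obtain ⟨a1, a2, a3, a4⟩ := ih (i + 1) j (by omega) hj (by omega)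
    obtain ⟨b1, b2, b3, b4⟩ := ih i (j + 1) hi (by omega) (by omega)
    have ht := g.inner i j hi hj (by omega)
    rw [a3, b4] at ht
    have ht' : (HEd E i j ∨ VEd E i j) ↔ barX n lam E (i + 1) j < barX n lam E i (j + 1) := by
      rw [ht]
      constructor
      · rintro (h | h) <;> linarith
      · intro h
        rcases lt_or_ge (barX n lam E (i + 1) j) (barX n lam E (i + 1) (j + 1)) with hc | hc
        · exact Or.inl hc
        · exact Or.inr (by linarith)
    have hle : barX n lam E (i + 1) j ≤ barX n lam E i (j + 1) := a1.trans b2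
    have e0 : barX n lam E i j = if HEd E i j then (if VEd E i j then
        (barX n lam E i (j + 1) + barX n lam E (i + 1) j) / 2 else barX n lam E (i + 1) j)
        else barX n lam E i (j + 1) := by
      rw [barX, dif_neg (by omega)]; rfl
    clear a1 a2 a3 a4 b1 b2 b3 b4 ht
    rw [e0]
    by_cases h2 : HEd E i j <;> by_cases h3 : VEd E i j <;>
      simp only [h2, h3, if_true, if_false, true_or, or_true, or_false, false_or, true_iff,
        false_iff, or_self, not_lt] at ht' ⊢ <;> refine ⟨?_, ?_, ?_, ?_⟩ <;> linarith

lemma barPt_spec {n lam E} (g : GoodE n lam E)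
    (hl : ∀ i, 1 ≤ i → i < n → lam (i + 1) ≤ lam i) (i j : ℕ) (h : (i, j) ∈ GCIdx n) :
    gcEntry n lam (barPt n lam E) (i, j) ≤ gcEntry n lam (barPt n lam E) (i, j + 1) ∧
    gcEntry n lam (barPt n lam E) (i + 1, j) ≤ gcEntry n lam (barPt n lam E) (i, j) ∧
    (HEd E i j ↔
      gcEntry n lam (barPt n lam E) (i, j) < gcEntry n lam (barPt n lam E) (i, j + 1)) ∧
    (VEd E i j ↔
      gcEntry n lam (barPt n lam E) (i + 1, j) < gcEntry n lam (barPt n lam E) (i, j)) := by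
  obtain ⟨h1, h2, h3⟩ := h
  simp only at h1 h2 h3
  rw [gcEntry_barPt h1 h2, gcEntry_barPt (by omega) h2, gcEntry_barPt h1 (by omega)]
  exact barX_spec g hl (n - (i + j)) i j h1 h2 (by omega)

/-- `ψ` in terms of edge sets. -/
def psiS (n : ℕ) (lam : ℕ → ℝ) (E : Set ((ℕ × ℕ) × (ℕ × ℕ))) : Set (GCIdx n → ℝ) :=
  GCFaceOf n lam {p | p ∈ GCIdx n ∧ ¬ HEd E p.1 p.2} {p | p ∈ GCIdx n ∧ ¬ VEd E p.1 p.2}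

lemma barPt_mem {n lam E} (g : GoodE n lam E)
    (hl : ∀ i, 1 ≤ i → i < n → lam (i + 1) ≤ lam i) : barPt n lam E ∈ psiS n lam E := by
  refine ⟨?_, ?_, ?_⟩
  · intro i j h
    have := barPt_spec g hl i j h
    exact ⟨this.1, this.2.1⟩
  · rintro ⟨i, j⟩ ⟨hp, h⟩
    have := barPt_spec g hl i j hp
    have h1 := mt this.2.2.1.2 h
    exact le_antisymm (not_lt.1 h1) this.1
  · rintro ⟨i, j⟩ ⟨hp, h⟩
    have := barPt_spec g hl i j hp
    have h1 := mt this.2.2.2.2 h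
    exact le_antisymm (not_lt.1 h1) this.2.1

lemma psiS_face {n lam E} (g : GoodE n lam E)
    (hl : ∀ i, 1 ≤ i → i < n → lam (i + 1) ≤ lam i) : IsGCFace n lam (psiS n lam E) :=
  ⟨⟨_, barPt_mem g hl⟩, _, _, fun _ hp => hp.1, fun _ hp => hp.1, rfl⟩

lemma GoodE.cases {n lam E} (g : GoodE n lam E) (e) (he : e ∈ E) :
    (∃ i < n, e = ((0, i), (0, i + 1)) ∨ e = ((i, 0), (i + 1, 0))) ∨
    (∃ i j : ℕ, (i, j) ∈ GCIdx n ∧ e = ((i - 1, j), (i, j)) ∧ HEd E i j) ∨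
    (∃ i j : ℕ, (i, j) ∈ GCIdx n ∧ e = ((i, j - 1), (i, j)) ∧ VEd E i j) := by
  obtain ⟨⟨a, b⟩, ⟨i, j⟩⟩ := e
  have h1 := g.step _ he
  have h2 := g.le _ he
  simp only [gridStep, Prod.mk.injEq] at h1 h2
  rcases h1 with ⟨rfl, rfl⟩ | ⟨rfl, rfl⟩
  · rcases Nat.eq_zero_or_pos j with rfl | hj
    · exact Or.inl ⟨a, by omega, Or.inr rfl⟩
    · exact Or.inr (Or.inl ⟨a + 1, j, ⟨by simp, hj, h2⟩, rfl, he⟩)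
  · rcases Nat.eq_zero_or_pos i with rfl | hj
    · exact Or.inl ⟨b, by omega, Or.inl rfl⟩
    · exact Or.inr (Or.inr ⟨i, b + 1, ⟨hj, by simp, h2⟩, rfl, he⟩)

lemma phiE_psiS {n lam E} (g : GoodE n lam E)
    (hl : ∀ i, 1 ≤ i → i < n → lam (i + 1) ≤ lam i) : phiE n lam (psiS n lam E) = E := by
  ext e
  constructor
  · rintro (⟨a, ha, rfl | rfl⟩ | ⟨a, b, hab, rfl, x, hx, hlt⟩ | ⟨a, b, hab, rfl, x, hx, hlt⟩)
    · exact g.bV a ha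
    · exact g.bH a ha
    · by_contra hc
      exact hlt.ne' (hx.2.1 (a, b) ⟨hab, hc⟩)
    · by_contra hc
      exact hlt.ne' (hx.2.2 (a, b) ⟨hab, hc⟩)
  · intro he
    rcases g.cases e he with h | ⟨i, j, h, he, h1⟩ | ⟨i, j, h, he, h1⟩
    · exact Or.inl h
    · exact Or.inr (Or.inl ⟨i, j, h, he, _, barPt_mem g hl, (barPt_spec g hl i j h).2.2.1.1 h1⟩)
    · exact Or.inr (Or.inr ⟨i, j, h, he, _, barPt_mem g hl, (barPt_spec g hl i j h).2.2.2.1 h1⟩)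

lemma IsGCFace.sub {n lam F} (hF : IsGCFace n lam F) : F ⊆ GCPoly n lam := by
  obtain ⟨-, SH, SV, -, -, rfl⟩ := hF
  exact fun x hx => hx.1

lemma IsGCFace.good {n lam F} (hF : IsGCFace n lam F) : GoodE n lam (phiE n lam F) :=
  phiE_good hF.sub hF.1

lemma phiE_mono {n lam} {F F' : Set (GCIdx n → ℝ)} (h : F ⊆ F') :
    phiE n lam F ⊆ phiE n lam F' := by
  rintro e (h1 | ⟨a, b, hab, h1, x, hx, hlt⟩ | ⟨a, b, hab, h1, x, hx, hlt⟩)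
  · exact Or.inl h1
  · exact Or.inr (Or.inl ⟨a, b, hab, h1, x, h hx, hlt⟩)
  · exact Or.inr (Or.inr ⟨a, b, hab, h1, x, h hx, hlt⟩)

lemma phiE_subset {n lam F F'} (hF : IsGCFace n lam F) (hF' : IsGCFace n lam F')
    (h : phiE n lam F ⊆ phiE n lam F') : F ⊆ F' := by
  intro x hx
  have hxP := hF.sub hx
  obtain ⟨-, SH, SV, hSH, hSV, rfl⟩ := hF'
  refine ⟨hxP, ?_, ?_⟩
  · rintro ⟨i, j⟩ hp
    have hI := hSH hp
    refine le_antisymm ?_ (hxP i j hI).1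
    by_contra hc
    have h1 : HEd (phiE n lam (GCFaceOf n lam SH SV)) i j :=
      h ((HEd_phiE hI).2 ⟨x, hx, not_le.1 hc⟩)
    obtain ⟨y, hy, hlt⟩ := (HEd_phiE hI).1 h1
    exact hlt.ne' (hy.2.1 _ hp)
  · rintro ⟨i, j⟩ hp
    have hI := hSV hp
    refine le_antisymm ?_ (hxP i j hI).2
    by_contra hc
    have h1 : VEd (phiE n lam (GCFaceOf n lam SH SV)) i j :=
      h ((VEd_phiE hI).2 ⟨x, hx, not_le.1 hc⟩)
    obtain ⟨y, hy, hlt⟩ := (VEd_phiE hI).1 h1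
    exact hlt.ne' (hy.2.2 _ hp)

lemma face_eq_psiS {n lam F} (hF : IsGCFace n lam F)
    (hl : ∀ i, 1 ≤ i → i < n → lam (i + 1) ≤ lam i) : F = psiS n lam (phiE n lam F) := by
  have h1 := psiS_face hF.good hl
  have h2 := phiE_psiS hF.good hl
  exact subset_antisymm (phiE_subset hF h1 h2.ge) (phiE_subset h1 hF h2.le)

/-! ### Counting edges and vertices -/

/-- The vertices with two incoming edges. -/
def twoIn (n : ℕ) (E : Set ((ℕ × ℕ) × (ℕ × ℕ))) : Set (ℕ × ℕ) :=
  {p | p ∈ GCIdx n ∧ HEd E p.1 p.2 ∧ VEd E p.1 p.2}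

lemma GoodE.finite {n lam E} (g : GoodE n lam E) : E.Finite := by
  refine Set.Finite.subset ((Set.finite_Iic ((n, n) : ℕ × ℕ)).prod
    (Set.finite_Iic ((n, n) : ℕ × ℕ))) ?_
  rintro ⟨⟨a, b⟩, ⟨i, j⟩⟩ he
  have h1 := g.step _ he
  have h2 := g.le _ he
  simp only [gridStep, Prod.mk.injEq] at h1 h2
  simp only [Set.mem_prod, Set.mem_Iic, Prod.mk_le_mk]
  omega

lemma endpts_finite {E : Set ((ℕ × ℕ) × (ℕ × ℕ))} (h : E.Finite) : (endpts E).Finite := by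
  refine ((h.image Prod.fst).union (h.image Prod.snd)).subset ?_
  rintro v ⟨e, he, rfl | rfl⟩
  · exact Or.inl ⟨e, he, rfl⟩
  · exact Or.inr ⟨e, he, rfl⟩

lemma GCIdx_finite (n : ℕ) : (GCIdx n).Finite := by
  refine (Set.finite_Iic ((n, n) : ℕ × ℕ)).subset ?_
  rintro ⟨i, j⟩ ⟨h1, h2, h3⟩
  simp only [Set.mem_Iic, Prod.mk_le_mk] at *
  omega

lemma GoodE.count {n lam E} (g : GoodE n lam E) (hn : 0 < n) :
    E.ncard + 1 = (endpts E).ncard + (twoIn n E).ncard := by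
  set E2 : Set ((ℕ × ℕ) × (ℕ × ℕ)) := {e | e ∈ E ∧ e.2 ∈ twoIn n E ∧ e.2 = (e.1.1, e.1.2 + 1)}
    with hE2
  have hsub : E2 ⊆ E := fun e he => he.1
  have hfin := g.finite
  have c2 : E2.ncard = (twoIn n E).ncard := by
    have himg : Prod.snd '' E2 = twoIn n E := by
      ext ⟨i, j⟩
      constructor
      · rintro ⟨e, he, h⟩
        rw [← h]; exact he.2.1
      · intro h
        have h1 : 1 ≤ j := h.1.2.1
        exact ⟨((i, j - 1), (i, j)), ⟨h.2.2, h, Prod.ext rfl (by simp only; omega)⟩, rfl⟩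
    rw [← himg, Set.InjOn.ncard_image]
    rintro ⟨⟨a, b⟩, v⟩ h ⟨⟨c, d⟩, w⟩ h' hvw
    have h1 := h.2.2
    have h2 := h'.2.2
    simp only at h1 h2 hvw
    subst hvw
    rw [h1] at h2
    simp only [Prod.mk.injEq, and_true] at h2 ⊢
    omega
  have c1 : (E \ E2).ncard = (endpts E \ {(0, 0)}).ncard := by
    have himg : Prod.snd '' (E \ E2) = endpts E \ {(0, 0)} := by
      ext ⟨i, j⟩
      constructor
      · rintro ⟨e, he, h⟩
        have hs := g.step _ he.1
        refine ⟨⟨e, he.1, Or.inr h.symm⟩, ?_⟩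
        rintro h0
        rw [h0] at h
        rcases hs with hs | hs <;> rw [h] at hs <;> simp at hs
      · rintro ⟨h, h0⟩
        have h0' : 0 < i + j := by
          by_contra hc
          apply h0
          show (i, j) = (0, 0)
          exact Prod.ext (by simp only; omega) (by simp only; omega)
        obtain ⟨⟨a, b⟩, hw⟩ := g.inn _ h h0'
        by_cases hc : ((a, b), (i, j)) ∈ E2
        · have h1 : 1 ≤ i := hc.2.1.1.1
          refine ⟨((i - 1, j), (i, j)), ⟨hc.2.1.2.1, ?_⟩, rfl⟩
          intro h2
          have := h2.2.2
          simp only [Prod.mk.injEq] at this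
          omega
        · exact ⟨_, ⟨hw, hc⟩, rfl⟩
    rw [← himg, Set.InjOn.ncard_image]
    have key : ∀ a b c d v, ((a, b), v) ∈ E \ E2 → ((c, d), v) ∈ E \ E2 → v = (a + 1, b) →
        v = (c, d + 1) → False := by
      rintro a b c d v h h' h1 h2
      obtain ⟨rfl, rfl⟩ : c = a + 1 ∧ b = d + 1 := by
        rw [h1] at h2; simp only [Prod.mk.injEq] at h2; omega
      apply h'.2
      refine ⟨h'.1, ?_, h2⟩
      subst h1
      have := g.le _ h.1
      exact ⟨⟨by simp, by simp, this⟩, h.1, h'.1⟩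
    rintro ⟨⟨a, b⟩, v⟩ h ⟨⟨c, d⟩, w⟩ h' hvw
    simp only at hvw
    subst hvw
    have h1 := g.step _ h.1
    have h2 := g.step _ h'.1
    simp only [gridStep] at h1 h2
    rcases h1 with h1 | h1 <;> rcases h2 with h2 | h2
    · rw [h1] at h2; simp only [Prod.mk.injEq, and_true] at h2 ⊢; omega
    · exact (key a b c d v h h' h1 h2).elim
    · exact (key c d a b v h' h h2 h1).elim
    · rw [h1] at h2; simp only [Prod.mk.injEq, and_true] at h2 ⊢; omega
  have d1 := Set.ncard_sdiff_add_ncard_of_subset hsub hfin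
  have d2 := Set.ncard_sdiff_singleton_add_one
    (show ((0, 0) : ℕ × ℕ) ∈ endpts E from ⟨_, g.bH 0 hn, Or.inl rfl⟩) (endpts_finite hfin)
  omega

/-! ### The direction of a face -/

/-- Entries of a direction vector (zero on the boundary). -/
noncomputable abbrev ent0 (n : ℕ) (y : GCIdx n → ℝ) (p : ℕ × ℕ) : ℝ := gcEntry n (fun _ => 0) y p

lemma gcEntry_add_smul {n lam} (x y : GCIdx n → ℝ) (t : ℝ) (p : ℕ × ℕ) :
    gcEntry n lam (x + t • y) p = gcEntry n lam x p + t * ent0 n y p := by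
  unfold ent0 gcEntry
  split_ifs <;> simp

lemma ent0_add {n} (x y : GCIdx n → ℝ) (p : ℕ × ℕ) :
    ent0 n (x + y) p = ent0 n x p + ent0 n y p := by
  unfold ent0 gcEntry
  split_ifs <;> simp

lemma ent0_smul {n} (t : ℝ) (y : GCIdx n → ℝ) (p : ℕ × ℕ) :
    ent0 n (t • y) p = t * ent0 n y p := by
  unfold ent0 gcEntry
  split_ifs <;> simp

lemma ent0_sub {n lam} (x y : GCIdx n → ℝ) (p : ℕ × ℕ) :
    ent0 n (x - y) p = gcEntry n lam x p - gcEntry n lam y p := by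
  unfold ent0 gcEntry
  split_ifs <;> simp

lemma ent0_idx {n} (y : GCIdx n → ℝ) (p : GCIdx n) : ent0 n y p.1 = y p := by
  unfold ent0 gcEntry
  rw [dif_pos p.2]

/-- The space of directions attached to an edge set. -/
def dirW (n : ℕ) (E : Set ((ℕ × ℕ) × (ℕ × ℕ))) : Submodule ℝ (GCIdx n → ℝ) where
  carrier := {y | ∀ i j : ℕ, (i, j) ∈ GCIdx n →
    (¬ HEd E i j → ent0 n y (i, j) = ent0 n y (i, j + 1)) ∧
    (¬ VEd E i j → ent0 n y (i, j) = ent0 n y (i + 1, j))}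
  add_mem' := by
    intro x y hx hy i j h
    simp only [ent0_add]
    exact ⟨fun h1 => by rw [(hx i j h).1 h1, (hy i j h).1 h1],
      fun h1 => by rw [(hx i j h).2 h1, (hy i j h).2 h1]⟩
  zero_mem' := by
    intro i j h
    have : ∀ p, ent0 n 0 p = 0 := by
      intro p; unfold ent0 gcEntry; split_ifs <;> simp
    simp [this]
  smul_mem' := by
    intro t x hx i j h
    simp only [ent0_smul]
    exact ⟨fun h1 => by rw [(hx i j h).1 h1], fun h1 => by rw [(hx i j h).2 h1]⟩

lemma direction_psiS {n lam E} (g : GoodE n lam E)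
    (hl : ∀ i, 1 ≤ i → i < n → lam (i + 1) ≤ lam i) :
    (affineSpan ℝ (psiS n lam E)).direction = dirW n E := by
  rw [direction_affineSpan]
  apply le_antisymm
  · rw [vectorSpan_def, Submodule.span_le]
    rintro _ ⟨x, hx, y, hy, rfl⟩
    intro i j h
    simp only [vsub_eq_sub]
    rw [ent0_sub (lam := lam), ent0_sub (lam := lam), ent0_sub (lam := lam)]
    refine ⟨fun h1 => ?_, fun h1 => ?_⟩
    · have a := hx.2.1 (i, j) ⟨h, h1⟩
      have b := hy.2.1 (i, j) ⟨h, h1⟩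
      simp only at a b
      rw [a, b]
    · have a := hx.2.2 (i, j) ⟨h, h1⟩
      have b := hy.2.2 (i, j) ⟨h, h1⟩
      simp only at a b
      rw [a, b]
  · intro y hy
    have hfin : Finite (GCIdx n) := GCIdx_finite n
    have hx := barPt_mem g hl
    set x := barPt n lam E with hxdef
    have tend : ∀ p, Filter.Tendsto (fun t : ℝ => gcEntry n lam (x + t • y) p)
        (nhdsWithin 0 (Set.Ioi 0)) (nhds (gcEntry n lam x p)) := by
      intro p
      simp only [gcEntry_add_smul]
      have : Continuous fun t : ℝ => gcEntry n lam x p + t * ent0 n y p := by fun_prop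
      have h := this.tendsto 0
      simp only [zero_mul, add_zero] at h
      exact h.mono_left nhdsWithin_le_nhds
    have ev : ∀ᶠ t : ℝ in nhdsWithin 0 (Set.Ioi 0), ∀ p : GCIdx n,
        gcEntry n lam (x + t • y) (p.1.1, p.1.2) ≤ gcEntry n lam (x + t • y) (p.1.1, p.1.2 + 1) ∧
        gcEntry n lam (x + t • y) (p.1.1 + 1, p.1.2) ≤ gcEntry n lam (x + t • y) (p.1.1, p.1.2) := by
      rw [Filter.eventually_all]
      rintro ⟨⟨i, j⟩, h⟩
      have sp := barPt_spec g hl i j h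
      refine Filter.Eventually.and ?_ ?_
      · by_cases hH : HEd E i j
        · filter_upwards [(tend (i, j)).eventually_lt (tend (i, j + 1)) (sp.2.2.1.1 hH)] with t ht
          exact ht.le
        · refine Filter.Eventually.of_forall fun t => ?_
          simp only [gcEntry_add_smul]
          rw [(hy i j h).1 hH]
          have := sp.1
          linarith
      · by_cases hV : VEd E i j
        · filter_upwards [(tend (i + 1, j)).eventually_lt (tend (i, j)) (sp.2.2.2.1 hV)] with t ht
          exact ht.le
        · refine Filter.Eventually.of_forall fun t => ?_
          simp only [gcEntry_add_smul]
          rw [(hy i j h).2 hV]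
          have := sp.2.1
          linarith
    obtain ⟨t, ht, ht0⟩ := (ev.and self_mem_nhdsWithin).exists
    have ht0 : (0 : ℝ) < t := ht0
    have hmem : x + t • y ∈ psiS n lam E := by
      refine ⟨fun i j h => ht ⟨(i, j), h⟩, ?_, ?_⟩
      · rintro ⟨i, j⟩ ⟨h, h1⟩
        have a := hx.2.1 (i, j) ⟨h, h1⟩
        simp only at a ⊢
        rw [gcEntry_add_smul, gcEntry_add_smul, a, (hy i j h).1 h1]
      · rintro ⟨i, j⟩ ⟨h, h1⟩
        have a := hx.2.2 (i, j) ⟨h, h1⟩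
        simp only at a ⊢
        rw [gcEntry_add_smul, gcEntry_add_smul, a, (hy i j h).2 h1]
    have h1 := vsub_mem_vectorSpan ℝ hmem hx
    have h2 := Submodule.smul_mem _ t⁻¹ h1
    rw [vsub_eq_sub, add_sub_cancel_left, smul_smul, inv_mul_cancel₀ ht0.ne', one_smul] at h2
    exact h2

/-- The direction vector with prescribed values at the vertices with two incoming edges. -/
noncomputable def barY (n : ℕ) (E : Set ((ℕ × ℕ) × (ℕ × ℕ))) (c : ℕ × ℕ → ℝ) : ℕ → ℕ → ℝ
  | i, j =>
    if n + 1 ≤ i + j then 0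
    else if HEd E i j then
      if VEd E i j then c (i, j)
      else barY n E c (i + 1) j
    else barY n E c i (j + 1)
  termination_by i j => n + 1 - (i + j)
  decreasing_by all_goals omega

lemma barY_spec {n lam E} (g : GoodE n lam E) (c : ℕ × ℕ → ℝ) (d : ℕ) : ∀ i j, 1 ≤ i → 1 ≤ j →
    i + j + d = n →
    (¬ HEd E i j → barY n E c i j = barY n E c i (j + 1)) ∧
    (¬ VEd E i j → barY n E c i j = barY n E c (i + 1) j) := by
  induction d with
  | zero =>
    intro i j hi hj hij
    have e1 : barY n E c i (j + 1) = 0 := by rw [barY, if_pos (by omega)]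
    have e2 : barY n E c (i + 1) j = 0 := by rw [barY, if_pos (by omega)]
    rw [barY, if_neg (by omega), e1, e2]
    by_cases h2 : HEd E i j <;> by_cases h3 : VEd E i j <;> simp [h2, h3]
  | succ d ih =>
    intro i j hi hj hij
    have a := ih (i + 1) j (by omega) hj (by omega)
    have b := ih i (j + 1) hi (by omega) (by omega)
    have ht := g.inner i j hi hj (by omega)
    have e0 : barY n E c i j = if HEd E i j then
      (if VEd E i j then c (i, j) else barY n E c (i + 1) j) else barY n E c i (j + 1) := by
      rw [barY, if_neg (by omega)]
    rw [e0]
    by_cases h2 : HEd E i j <;> by_cases h3 : VEd E i j <;> simp only [h2, h3, if_true, if_false,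
      not_true, not_false_iff, true_imp_iff, false_imp_iff, and_self, true_and, and_true]
    have h4 : ¬ (HEd E (i + 1) j ∨ VEd E i (j + 1)) := by
      rw [← ht]; tauto
    rw [not_or] at h4
    rw [a.1 h4.1, b.2 h4.2]

lemma finrank_dirW {n lam E} (g : GoodE n lam E) :
    Module.finrank ℝ (dirW n E) = (twoIn n E).ncard := by
  have hBfin : (twoIn n E).Finite := (GCIdx_finite n).subset fun p hp => hp.1
  have : Fintype (twoIn n E) := hBfin.fintype
  let r : dirW n E →ₗ[ℝ] (twoIn n E → ℝ) :=
    { toFun := fun y p => y.1 ⟨p.1, p.2.1⟩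
      map_add' := fun _ _ => rfl
      map_smul' := fun _ _ => rfl }
  have hinj : Function.Injective r := by
    rw [← LinearMap.ker_eq_bot, LinearMap.ker_eq_bot']
    rintro ⟨y, hy⟩ h0
    have key : ∀ d i j, 1 ≤ i → 1 ≤ j → i + j + d = n + 1 → ent0 n y (i, j) = 0 := by
      intro d
      induction d with
      | zero =>
        intro i j hi hj hij
        exact gcEntry_top y i j (by omega)
      | succ d ih =>
        intro i j hi hj hij
        have hI : (i, j) ∈ GCIdx n := ⟨hi, hj, by simp only; omega⟩
        by_cases h2 : HEd E i j
        · by_cases h3 : VEd E i j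
          · rw [ent0_idx y ⟨(i, j), hI⟩]
            exact congrFun h0 ⟨(i, j), hI, h2, h3⟩
          · rw [(hy i j hI).2 h3]
            exact ih _ _ (by omega) hj (by omega)
        · rw [(hy i j hI).1 h2]
          exact ih _ _ hi (by omega) (by omega)
    ext ⟨⟨i, j⟩, h⟩
    have := key (n + 1 - (i + j)) i j h.1 h.2.1 (by have := h.2.2; simp only at this; omega)
    rw [ent0_idx y ⟨(i, j), h⟩] at this
    simpa using this
  have hsurj : Function.Surjective r := by
    intro c
    let c' : ℕ × ℕ → ℝ := fun p => if h : p ∈ twoIn n E then c ⟨p, h⟩ else 0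
    let y : GCIdx n → ℝ := fun p => barY n E c' p.1.1 p.1.2
    have hent : ∀ i j, 1 ≤ i → 1 ≤ j → ent0 n y (i, j) = barY n E c' i j := by
      intro i j hi hj
      unfold ent0 gcEntry
      split_ifs with h
      · rfl
      · rw [barY, if_pos]
        by_contra hc
        exact h ⟨hi, hj, by simp only; omega⟩
    have hy : y ∈ dirW n E := by
      intro i j h
      obtain ⟨h1, h2, h3⟩ := h
      simp only at h1 h2 h3
      rw [hent i j h1 h2, hent i (j + 1) h1 (by omega), hent (i + 1) j (by omega) h2]
      exact barY_spec g c' (n - (i + j)) i j h1 h2 (by omega)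
    refine ⟨⟨y, hy⟩, ?_⟩
    funext ⟨⟨i, j⟩, h⟩
    show barY n E c' i j = _
    have := h.1.2.2
    simp only at this
    rw [barY, if_neg (by omega), if_pos h.2.1, if_pos h.2.2]
    simp only [c']
    rw [dif_pos h]
  rw [(LinearEquiv.ofBijective r ⟨hinj, hsurj⟩).finrank_eq, Module.finrank_fintype_fun_eq_card,
    ← Nat.card_eq_fintype_card, Nat.card_coe_set_eq]

/-- Lemma 2.7. The map `φ` is a poset isomorphism from the
faces of `P_λ` (ordered by inclusion) onto the faces of `Γ_k` (ordered by
inclusion of subgraphs), and it preserves dimensions. -/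
theorem phiGC_posetIso (s : ℕ) (hs : 1 ≤ s) (k : ℕ → ℕ) (hk : ∀ i < s, 0 < k i)
    (lam : ℕ → ℝ) (hlam : HasBlockStructure s k lam) :
    (∀ F F' : Set (GCIdx (nseq k s) → ℝ),
      IsGCFace (nseq k s) lam F → IsGCFace (nseq k s) lam F' →
      (F ⊆ F' ↔ phiGC (nseq k s) lam F ≤ phiGC (nseq k s) lam F')) ∧
    (∀ F : Set (GCIdx (nseq k s) → ℝ), IsGCFace (nseq k s) lam F →
      IsLadderFace s k (phiGC (nseq k s) lam F)) ∧
    (∀ γ : LGraph, IsLadderFace s k γ →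
      ∃ F : Set (GCIdx (nseq k s) → ℝ), IsGCFace (nseq k s) lam F ∧
        phiGC (nseq k s) lam F = γ) ∧
    (∀ F : Set (GCIdx (nseq k s) → ℝ), IsGCFace (nseq k s) lam F →
      (GCdim (nseq k s) F : ℤ) = ldim (phiGC (nseq k s) lam F)) := by

  have hl : ∀ i, 1 ≤ i → i < nseq k s → lam (i + 1) ≤ lam i := fun i h1 h2 =>
    (lam_prop s k lam hlam i h1 h2).1
  have hn := nseq_pos s hs k hk
  refine ⟨?_, ?_, ?_, ?_⟩
  · intro F F' hF hF'
    constructor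
    · intro h
      have := phiE_mono (lam := lam) h
      refine ⟨?_, this⟩
      rintro v ⟨e, he, hv⟩
      exact ⟨e, this he, hv⟩
    · intro h
      exact phiE_subset hF hF' h.2
  · intro F hF
    exact hF.good.isLadderFace hs hk hlam
  · intro γ hγ
    obtain ⟨g, hV⟩ := IsLadderFace.good hs hk hlam γ hγ
    refine ⟨_, psiS_face g hl, ?_⟩
    have h := phiE_psiS g hl
    apply LGraph.ext
    · show endpts (phiE _ _ _) = _
      rw [h, hV]
    · exact h
  · intro F hF
    have g := hF.good
    have h1 : GCdim (nseq k s) F = (twoIn (nseq k s) (phiE (nseq k s) lam F)).ncard := by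
      unfold GCdim
      conv_lhs => rw [face_eq_psiS hF hl]
      rw [direction_psiS g hl, finrank_dirW g]
    have h2 := g.count hn
    rw [h1]
    show _ = ((phiE (nseq k s) lam F).ncard : ℤ) - ((endpts (phiE (nseq k s) lam F)).ncard : ℤ) + 1
    omega
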